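/- S[U]^G is Cohen-Macaulay if and only if S[V]^G is Cohen-Macaulay. -/

import Mathlib

set_option synthInstance.maxHeartbeats 1000000
set_option maxHeartbeats 1000000

open MvPolynomial

/-- The algebra endomorphism of the polynomial ring induced by a matrix acting (on the
right) on the coefficient row vectors of linear forms. -/
noncomputable def matSub {F : Type*} [CommRing F] {n : ℕ} (M : Matrix (Fin n) (Fin n) F) :
    MvPolynomial (Fin n) F →ₐ[F] MvPolynomial (Fin n) F :=
  aeval (fun i => ∑ j, M i j • X j)

/-- The invariant ring of a matrix representation. -/
noncomputable def invariants {F : Type*} [CommRing F] {n : ℕ} {G : Type*} [Group G]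
    (ρ : G →* GL (Fin n) F) : Subalgebra F (MvPolynomial (Fin n) F) where
  carrier := {p | ∀ σ : G, matSub ((ρ σ : Matrix (Fin n) (Fin n) F)) p = p}
  mul_mem' := fun ha hb σ => by rw [map_mul, ha σ, hb σ]
  add_mem' := fun ha hb σ => by rw [map_add, ha σ, hb σ]
  one_mem' := fun σ => map_one _
  zero_mem' := fun σ => map_zero _
  algebraMap_mem' := fun r σ => AlgHom.commutes _ r

/-- A homogeneous system of parameters of an invariant ring `R ⊆ F[X₁,…,Xₙ]`: a family of
`n` algebraically independent homogeneous elements of positive degree over whose generated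
polynomial subalgebra `R` is a finitely generated module. -/
def IsHSOP {F : Type*} [Field F] {n : ℕ} (R : Subalgebra F (MvPolynomial (Fin n) F))
    (f : Fin n → R) : Prop :=
  AlgebraicIndependent F f ∧
  (∀ i, ∃ d : ℕ, 0 < d ∧ (f i : MvPolynomial (Fin n) F).IsHomogeneous d) ∧
  Module.Finite (Algebra.adjoin F (Set.range f)) R

/-- `R` is Cohen-Macaulay: `R` is a free module over the subalgebra generated by some
homogeneous system of parameters. -/
def IsCM {F : Type*} [Field F] {n : ℕ} (R : Subalgebra F (MvPolynomial (Fin n) F)) : Prop :=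
  ∃ f : Fin n → R, IsHSOP R f ∧ Module.Free (Algebra.adjoin F (Set.range f)) R

set_option linter.style.haveILetI false

lemma aux_exists_coprime {F K : Type*} [Field F] [Field K]
    (ψ : Polynomial F →+* Polynomial K) (N : ℕ) : ∀ δ : Polynomial K, δ ≠ 0 → δ.natDegree ≤ N →
    ∀ q : Polynomial F, q ≠ 0 → ∃ p : Polynomial F, p.Monic ∧ 0 < p.natDegree ∧ IsCoprime p q ∧
      IsCoprime (ψ p) δ := by
  classical
  induction N using Nat.strong_induction_on with
  | _ N ih =>
  intro δ hδ hN q hq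
  have hdeg : (Polynomial.X * q + 1).natDegree = q.natDegree + 1 := by
    rw [← Polynomial.C_1, Polynomial.natDegree_add_C, Polynomial.natDegree_X_mul hq]
  have h0 : Polynomial.X * q + 1 ≠ 0 := by
    intro h; rw [h] at hdeg; simp at hdeg
  obtain ⟨p, hp, hpd, hpq⟩ : ∃ p : Polynomial F, p.Monic ∧ 0 < p.natDegree ∧ IsCoprime p q := by
    refine ⟨_, Polynomial.monic_mul_leadingCoeff_inv h0, ?_, ?_⟩
    · rw [Polynomial.natDegree_mul_leadingCoeff_inv _ h0, hdeg]; omega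
    · have hu : IsUnit (Polynomial.C (Polynomial.X * q + 1).leadingCoeff⁻¹) := by
        rw [Polynomial.isUnit_C]
        exact (IsUnit.mk0 _ (inv_ne_zero (Polynomial.leadingCoeff_ne_zero.2 h0)))
      rw [isCoprime_mul_unit_right_left hu]
      exact ⟨1, -Polynomial.X, by ring⟩
  by_cases hc : IsCoprime (ψ p) δ
  · exact ⟨p, hp, hpd, hpq, hc⟩
  set e := EuclideanDomain.gcd (ψ p) δ with he
  have heu : ¬ IsUnit e := fun h => hc (EuclideanDomain.gcd_isUnit_iff.1 h)
  obtain ⟨δ', hδ'⟩ : e ∣ δ := EuclideanDomain.gcd_dvd_right _ _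
  have hep : e ∣ ψ p := EuclideanDomain.gcd_dvd_left _ _
  have he0 : e ≠ 0 := by rintro h; rw [h] at hδ'; simp at hδ'; exact hδ hδ'
  have hd0 : δ' ≠ 0 := by rintro h; rw [h] at hδ'; simp at hδ'; exact hδ hδ'
  have hed : 0 < e.natDegree := by
    rw [Nat.pos_iff_ne_zero]
    intro h
    exact heu (Polynomial.isUnit_iff_degree_eq_zero.2 ((Polynomial.degree_eq_iff_natDegree_eq he0).2 h))
  have hdd : δ.natDegree = e.natDegree + δ'.natDegree := by
    rw [hδ', Polynomial.natDegree_mul he0 hd0]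
  obtain ⟨p', h1, h2, h3, h4⟩ := ih (N - 1) (by omega) δ' hd0 (by omega) (q * p)
    (mul_ne_zero hq hp.ne_zero)
  refine ⟨p', h1, h2, h3.of_mul_right_left, ?_⟩
  rw [hδ']
  exact IsCoprime.mul_right ((h3.of_mul_right_right.map ψ).of_isCoprime_of_dvd_right hep) h4

/-- Homogenised substitution. -/
noncomputable def hgPoly {F L : Type*} [Field F] [CommRing L] (f : F →+* L) (w : L) (a b : ℕ)
    (p : Polynomial F) : Polynomial L :=
  ∑ k ∈ Finset.range (p.natDegree + 1),
    Polynomial.C (f (p.coeff k) * w ^ (b * (p.natDegree - k))) * Polynomial.X ^ (a * k)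

lemma hgPoly_map {F L L' : Type*} [Field F] [CommRing L] [CommRing L'] (f : F →+* L) (w : L)
    (a b : ℕ) (p : Polynomial F) (h : L →+* L') :
    (hgPoly f w a b p).map h = hgPoly (h.comp f) (h w) a b p := by
  simp [hgPoly, Polynomial.map_sum]

lemma hgPoly_monic {F L : Type*} [Field F] [CommRing L] (f : F →+* L) (w : L)
    (a b : ℕ) (ha : 0 < a) (p : Polynomial F) (hp : p.Monic) :
    (hgPoly f w a b p).Monic ∧ (Nontrivial L → (hgPoly f w a b p).natDegree = a * p.natDegree) := by
  unfold hgPoly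
  rw [Finset.sum_range_succ, add_comm]
  have : p.coeff p.natDegree = 1 := hp
  simp only [this, map_one, Nat.sub_self, mul_zero, pow_zero, one_mul]
  suffices h : _ from ⟨Polynomial.monic_X_pow_add h,
    fun _ => by rw [Polynomial.natDegree_add_eq_left_of_degree_lt (by simpa using h)]; simp⟩
  refine lt_of_le_of_lt (Polynomial.degree_sum_le _ _) ?_
  rw [Finset.sup_lt_iff (WithBot.bot_lt_coe _)]
  intro k hk
  refine lt_of_le_of_lt (Polynomial.degree_C_mul_X_pow_le _ _) ?_
  rw [Finset.mem_range] at hk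
  exact_mod_cast Nat.mul_lt_mul_of_pos_left hk ha

lemma aux_elim {F L : Type*} [Field F] [CommRing L] [IsDomain L] (f : F →+* L) (w : L)
    (hw : w ≠ 0) (a b : ℕ) (δ : Polynomial L) (hδ : δ ≠ 0) :
    ∃ p : Polynomial F, p.Monic ∧ 0 < p.natDegree ∧ ∃ l : L, l ≠ 0 ∧
      Polynomial.C l ∈ Ideal.span {hgPoly f w a b p, δ} := by
  let K := FractionRing L
  let i : L →+* K := algebraMap L K
  have hi : Function.Injective i := IsFractionRing.injective L K
  have hw' : i w ≠ 0 := fun h => hw (hi (by rw [h, map_zero]))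
  let ψ : Polynomial F →+* Polynomial K :=
    Polynomial.eval₂RingHom (Polynomial.C.comp (i.comp f))
      (Polynomial.C ((i w)⁻¹ ^ b) * Polynomial.X ^ a)
  have hδ' : δ.map i ≠ 0 := (Polynomial.map_ne_zero_iff hi).2 hδ
  obtain ⟨p, hp, hpd, -, hc⟩ := aux_exists_coprime ψ _ (δ.map i) hδ' le_rfl 1 one_ne_zero
  refine ⟨p, hp, hpd, ?_⟩
  have hg : (hgPoly f w a b p).map i = Polynomial.C (i w ^ (b * p.natDegree)) * ψ p := by
    rw [hgPoly_map]
    simp only [ψ, Polynomial.coe_eval₂RingHom, Polynomial.eval₂_eq_sum_range, hgPoly,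
      Finset.mul_sum]
    refine Finset.sum_congr rfl fun k hk => ?_
    have hk' : k ≤ p.natDegree := by rw [Finset.mem_range] at hk; omega
    obtain ⟨c, hc⟩ := Nat.exists_eq_add_of_le hk'
    have : i w ^ (b * (p.natDegree - k)) = i w ^ (b * p.natDegree) * ((i w)⁻¹ ^ b) ^ k := by
      rw [hc, Nat.add_sub_cancel_left, mul_add, pow_add, ← pow_mul, inv_pow, mul_comm (_ ^ (b * k)),
        mul_assoc, mul_inv_cancel₀ (pow_ne_zero _ hw'), mul_one]
    rw [this]
    simp only [RingHom.comp_apply, Polynomial.C_mul, mul_pow, Polynomial.C_pow, ← pow_mul]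
    ring
  have hc' : IsCoprime ((hgPoly f w a b p).map i) (δ.map i) := by
    rw [hg, isCoprime_mul_unit_left_left]
    · exact hc
    · rw [Polynomial.isUnit_C]; exact (IsUnit.mk0 _ (pow_ne_zero _ hw'))
  obtain ⟨u, v, huv⟩ := hc'
  obtain ⟨s, hs, hs'⟩ := IsLocalization.integerNormalization_spec (nonZeroDivisors L) u
  obtain ⟨r, hr, hr'⟩ := IsLocalization.integerNormalization_spec (nonZeroDivisors L) v
  refine ⟨s * r, mul_ne_zero (nonZeroDivisors.ne_zero hs) (nonZeroDivisors.ne_zero hr), ?_⟩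
  rw [Ideal.mem_span_pair]
  refine ⟨Polynomial.C r * IsLocalization.integerNormalization (nonZeroDivisors L) u,
    Polynomial.C s * IsLocalization.integerNormalization (nonZeroDivisors L) v, ?_⟩
  apply Polynomial.map_injective i hi
  simp only [Polynomial.map_add, Polynomial.map_mul, Polynomial.map_C, map_mul]
  have e1 : Polynomial.map i (IsLocalization.integerNormalization (nonZeroDivisors L) u)
    = Polynomial.C (i s) * u := by
    rw [hs']; simp [Algebra.smul_def]; exact Or.inl rfl
  have e2 : Polynomial.map i (IsLocalization.integerNormalization (nonZeroDivisors L) v)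
    = Polynomial.C (i r) * v := by
    rw [hr']; simp [Algebra.smul_def]; exact Or.inl rfl
  rw [e1, e2]
  linear_combination (Polynomial.C (i s) * Polynomial.C (i r)) * huv

lemma aux_elim_mv {F : Type*} [Field F] (a : ℕ) (m : ℕ) : ∀ (b : Fin m → ℕ)
    (δ : MvPolynomial (Fin m) (Polynomial F)), δ ≠ 0 →
    ∃ p : Fin m → Polynomial F, (∀ i, (p i).Monic ∧ 0 < (p i).natDegree) ∧
      ∃ l : Polynomial F, l ≠ 0 ∧ C l ∈ Ideal.span {δ} ⊔ Ideal.span (Set.range fun i =>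
        Polynomial.aeval (X i : MvPolynomial (Fin m) (Polynomial F))
          (hgPoly Polynomial.C Polynomial.X a (b i) (p i))) := by
  induction m with
  | zero =>
    intro b δ hδ
    refine ⟨fun i => i.elim0, fun i => i.elim0, constantCoeff δ, ?_, ?_⟩
    · intro h
      apply hδ
      rw [MvPolynomial.eq_C_of_isEmpty δ]
      simpa [constantCoeff_eq] using h
    · have : C (constantCoeff δ) = δ := by
        rw [constantCoeff_eq]; exact (MvPolynomial.eq_C_of_isEmpty δ).symm
      rw [this]
      exact Ideal.mem_sup_left (Ideal.subset_span rfl)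
  | succ m ih =>
    intro b δ hδ
    let e := finSuccEquiv (Polynomial F) m
    have hδ' : e δ ≠ 0 := by simpa using hδ
    obtain ⟨p0, hp0, hp0d, l1, hl1, hmem⟩ := aux_elim (L := MvPolynomial (Fin m) (Polynomial F))
      ((C : Polynomial F →+* _).comp Polynomial.C) (C Polynomial.X)
      (by simp) a (b 0) (e δ) hδ'
    obtain ⟨p, hp, l, hl, hmem2⟩ := ih (fun i => b i.succ) l1 hl1
    refine ⟨Fin.cons p0 p, ?_, l, hl, ?_⟩
    · intro i
      refine Fin.cases ⟨hp0, hp0d⟩ (fun i => hp i) i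
    set I : Ideal (MvPolynomial (Fin (m+1)) (Polynomial F)) := Ideal.span {δ} ⊔ Ideal.span (Set.range fun i =>
        Polynomial.aeval (X i : MvPolynomial (Fin (m+1)) (Polynomial F))
          (hgPoly Polynomial.C Polynomial.X a (b i)
            ((Fin.cons p0 p : Fin (m+1) → Polynomial F) i))) with hI
    have h1 : e.symm (Polynomial.C l1) ∈ I := by
      have hle : Ideal.span {hgPoly ((C : Polynomial F →+* _).comp Polynomial.C) (C Polynomial.X)
          a (b 0) p0, e δ} ≤ Ideal.comap (e.symm : _ →+* _) I := by
        rw [Ideal.span_le]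
        rintro x (rfl | rfl)
        · refine Ideal.mem_sup_right (Ideal.subset_span ⟨0, ?_⟩)
          simp only [Fin.cons_zero]
          show _ = e.symm _
          rw [eq_comm, AlgEquiv.symm_apply_eq]
          rw [← hgPoly_map, ← Polynomial.aeval_algHom_apply]
          simp only [e, finSuccEquiv_X_zero]
          rw [Polynomial.aeval_def, Polynomial.map]
          rfl
        · refine Ideal.mem_sup_left (Ideal.subset_span ?_)
          show e.symm (e δ) ∈ _
          simp
      exact hle hmem
    have hle2 : Ideal.span {l1} ⊔ Ideal.span (Set.range fun i =>
        Polynomial.aeval (X i : MvPolynomial (Fin m) (Polynomial F))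
          (hgPoly Polynomial.C Polynomial.X a (b i.succ) (p i))) ≤
          Ideal.comap ((e.symm : _ →+* _).comp Polynomial.C) I := by
      refine sup_le ?_ ?_
      · rw [Ideal.span_le]
        rintro x rfl
        exact h1
      · rw [Ideal.span_le]
        rintro x ⟨i, rfl⟩
        refine Ideal.mem_sup_right (Ideal.subset_span ⟨i.succ, ?_⟩)
        simp only [Fin.cons_succ]
        show _ = e.symm _
        rw [eq_comm, AlgEquiv.symm_apply_eq]
        rw [← Polynomial.aeval_algHom_apply e]
        simp only [e, finSuccEquiv_X_succ]
        have := Polynomial.aeval_algHom_apply (IsScalarTower.toAlgHom (Polynomial F) (MvPolynomial (Fin m) (Polynomial F)) (Polynomial (MvPolynomial (Fin m) (Polynomial F)))) (X i) (hgPoly Polynomial.C Polynomial.X a (b i.succ) (p i))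
        exact this.symm
    have := hle2 hmem2
    have h3 : e.symm (Polynomial.C (C l)) = C l := by
      rw [AlgEquiv.symm_apply_eq]
      simp [e, finSuccEquiv_apply]
    rw [Ideal.mem_comap] at this
    change e.symm (Polynomial.C (C l)) ∈ I at this
    rw [h3] at this
    exact this

/-- finite free ring homomorphism -/
def FFree {R S : Type*} [CommRing R] [CommRing S] (f : R →+* S) : Prop :=
  letI := f.toAlgebra
  Module.Free R S ∧ Module.Finite R S

lemma FFree.comp {R S T : Type*} [CommRing R] [CommRing S] [CommRing T] {f : R →+* S}
    {g : S →+* T} (hf : FFree f) (hg : FFree g) : FFree (g.comp f) := by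
  letI := f.toAlgebra
  letI := g.toAlgebra
  letI := (g.comp f).toAlgebra
  haveI : IsScalarTower R S T := IsScalarTower.of_algebraMap_eq fun x => rfl
  obtain ⟨h1, h2⟩ := hf
  obtain ⟨h3, h4⟩ := hg
  exact ⟨Module.Free.trans (R := R) (S := S) (M := T), Module.Finite.trans S T⟩

lemma FFree.equiv {R S : Type*} [CommRing R] [CommRing S] (e : R ≃+* S) :
    FFree (e : R →+* S) := by
  letI := (e : R →+* S).toAlgebra
  let e' : R ≃ₗ[R] S := { e with map_smul' := fun r x => map_mul e r x }
  exact ⟨Module.Free.of_equiv e', Module.Finite.equiv e'⟩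

lemma FFree.of_equiv {R S T : Type*} [CommRing R] [CommRing S] [CommRing T] {g : S →+* T}
    (e : R ≃+* S) (h : FFree (g.comp (e : R →+* S))) : FFree g := by
  have := (FFree.equiv e.symm).comp h
  convert this
  ext x; simp

lemma FFree.polyMap {R S : Type*} [CommRing R] [CommRing S] {f : R →+* S} (h : FFree f) :
    FFree (Polynomial.mapRingHom f) := by
  letI := f.toAlgebra
  obtain ⟨h1, h2⟩ := h
  letI : Algebra (Polynomial R) (Polynomial S) := (Polynomial.mapRingHom f).toAlgebra
  have hb : Algebra.IsPushout R (Polynomial R) S (Polynomial S) := inferInstance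
  refine ⟨hb.out.free, ?_⟩
  exact Module.Finite.equiv hb.out.equiv

lemma FFree.monic {L : Type*} [CommRing L] [Nontrivial L] (g : Polynomial L) (hg : g.Monic)
    (hd : 0 < g.natDegree) : FFree (Polynomial.eval₂RingHom (Polynomial.C : L →+* _) g) := by
  let h : Polynomial (Polynomial L) := g.map Polynomial.C - Polynomial.C Polynomial.X
  have hm : h.Monic := by
    apply (hg.map _).sub_of_left
    rw [hg.degree_map]
    refine lt_of_le_of_lt Polynomial.degree_C_le ?_
    rw [Polynomial.degree_eq_natDegree hg.ne_zero]
    exact_mod_cast hd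
  let tt : AdjoinRoot h →+* Polynomial L :=
    AdjoinRoot.lift (Polynomial.eval₂RingHom (Polynomial.C : L →+* _) g) Polynomial.X (by
      simp only [h, Polynomial.eval₂_sub, Polynomial.eval₂_C, Polynomial.eval₂_map]
      have : (Polynomial.eval₂RingHom (Polynomial.C : L →+* _) g).comp Polynomial.C = Polynomial.C := by
        ext; simp
      rw [this]
      simp)
  let inv : Polynomial L →+* AdjoinRoot h :=
    Polynomial.eval₂RingHom ((AdjoinRoot.of h).comp Polynomial.C) (AdjoinRoot.root h)
  have h1 : tt.comp inv = RingHom.id _ := by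
    ext <;> simp [tt, inv]
  have h2 : inv.comp tt = RingHom.id _ := by
    apply AdjoinRoot.ringHom_ext
    · ext x
      · simp [tt, inv]
      · have := AdjoinRoot.eval₂_root h
        simp only [h, Polynomial.eval₂_sub, Polynomial.eval₂_C, Polynomial.eval₂_map, sub_eq_zero] at this
        simpa [tt, inv] using this
    · simp [tt, inv]
  let e : AdjoinRoot h ≃+* Polynomial L := RingEquiv.ofRingHom tt inv h1 h2
  have hof : FFree (AdjoinRoot.of h) := by
    have := hm.free_adjoinRoot
    have := hm.finite_adjoinRoot
    have e : (AdjoinRoot.of h).toAlgebra = (inferInstance : Algebra (Polynomial L) (AdjoinRoot h)) := by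
      apply Algebra.algebra_ext
      intro r; rfl
    unfold FFree
    rw [e]
    exact ⟨‹_›, ‹_›⟩
  have := hof.comp (FFree.equiv e)
  convert this
  ext <;> simp [e, tt]

lemma FFree.theta {L : Type*} [CommRing L] [Nontrivial L] (m : ℕ) : ∀ (g : Fin m → Polynomial L),
    (∀ i, (g i).Monic) → (∀ i, 0 < (g i).natDegree) →
    FFree ((aeval (R := L) (fun i => Polynomial.aeval (X i : MvPolynomial (Fin m) L) (g i)) :
      MvPolynomial (Fin m) L →ₐ[L] MvPolynomial (Fin m) L) :
      MvPolynomial (Fin m) L →+* MvPolynomial (Fin m) L) := by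
  induction m with
  | zero =>
    intro g _ _
    have := FFree.equiv (RingEquiv.refl (MvPolynomial (Fin 0) L))
    convert this
    ext i
    · simp
    · exact i.elim0
  | succ m ih =>
    intro g hg hd
    have h1 := (ih (fun i => g i.succ) (fun i => hg _) (fun i => hd _)).polyMap
    have h2 := FFree.monic (L := MvPolynomial (Fin m) L) ((g 0).map C) ((hg 0).map _)
      (by rw [(hg 0).natDegree_map]; exact hd 0)
    let e := finSuccEquiv L m
    have h3 := ((FFree.equiv (e.toRingEquiv)).comp (h1.comp h2)).comp (FFree.equiv (e.symm.toRingEquiv))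
    convert h3
    refine MvPolynomial.ringHom_ext ?_ ?_
    · intro r
      simp only [RingHom.comp_apply]
      show _ = e.symm _
      rw [eq_comm, AlgEquiv.symm_apply_eq]
      show Polynomial.eval₂ _ _ (Polynomial.map _ (e (C r))) = e (aeval _ _)
      have hC : e (C r) = Polynomial.C (C r) := by simp [e, finSuccEquiv_apply]
      rw [aeval_C, MvPolynomial.algebraMap_eq, hC]
      simp
    · intro i
      simp only [RingHom.comp_apply]
      show _ = e.symm _
      rw [eq_comm, AlgEquiv.symm_apply_eq]
      show Polynomial.eval₂ _ _ (Polynomial.map _ (e (X i))) = e (aeval _ _)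
      rw [aeval_X, ← Polynomial.aeval_algHom_apply e]
      refine Fin.cases ?_ (fun i => ?_) i
      · simp only [e, finSuccEquiv_X_zero]
        simp
        rw [Polynomial.aeval_def, Polynomial.map]
        rfl
      · simp only [e, finSuccEquiv_X_succ]
        simp
        exact (Polynomial.aeval_algHom_apply (IsScalarTower.toAlgHom L (MvPolynomial (Fin m) L) (Polynomial (MvPolynomial (Fin m) L))) (X i) (g i.succ)).symm

lemma mem_idealX {L : Type*} [CommRing L] {m : ℕ} (q : MvPolynomial (Fin m) L) :
    q ∈ Ideal.span (Set.range (X : Fin m → MvPolynomial (Fin m) L)) ↔ constantCoeff q = 0 := by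
  rw [← Set.image_univ, MvPolynomial.mem_ideal_span_X_image, constantCoeff_eq]
  constructor
  · intro h
    by_contra h0
    obtain ⟨i, -, hi⟩ := h 0 (by rwa [mem_support_iff])
    exact hi rfl
  · intro h d hd
    by_contra hcon
    push Not at hcon
    have : d = 0 := by ext i; exact hcon i trivial
    rw [this, mem_support_iff] at hd
    exact hd h

/-- Freeness: injectivity part. -/
lemma aux_free {F A R : Type*} [Field F] [CommRing A] [CommRing R] {m k : ℕ}
    [Algebra (MvPolynomial (Fin m) F) A] [Algebra (MvPolynomial (Fin m) F) R]
    [Module.Projective (MvPolynomial (Fin m) F) A]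
    (π : A →ₗ[MvPolynomial (Fin m) F] R) (hπ : Function.Surjective π)
    (t : A) (hker : ∀ x, π x = 0 ↔ ∃ a, x = t * a)
    (hreg : ∀ a : A, t * a ∈ (Ideal.span (Set.range (X : Fin m → MvPolynomial (Fin m) F))) •
        (⊤ : Submodule (MvPolynomial (Fin m) F) A) →
      a ∈ (Ideal.span (Set.range (X : Fin m → MvPolynomial (Fin m) F))) •
        (⊤ : Submodule (MvPolynomial (Fin m) F) A))
    (b : Fin k → R)
    (hspan : Submodule.span (MvPolynomial (Fin m) F) (Set.range b) = ⊤)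
    (hli : ∀ c : Fin k → MvPolynomial (Fin m) F, ∑ j, c j • b j = 0 →
      ∀ j, c j ∈ Ideal.span (Set.range (X : Fin m → MvPolynomial (Fin m) F))) :
    Module.Free (MvPolynomial (Fin m) F) R ∧ Module.Finite (MvPolynomial (Fin m) F) R := by
  classical
  set S := MvPolynomial (Fin m) F with hS
  set I : Ideal S := Ideal.span (Set.range (X : Fin m → MvPolynomial (Fin m) F)) with hI
  choose bt hbt using fun j => hπ (b j)
  let φ : (Fin k → S) →ₗ[S] R := Fintype.linearCombination S b
  let φt : (Fin k → S) →ₗ[S] A := Fintype.linearCombination S bt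
  have hφ : ∀ c, π (φt c) = φ c := by
    intro c
    simp [φ, φt, Fintype.linearCombination_apply, hbt]
  have hφs : Function.Surjective φ := by
    rw [← LinearMap.range_eq_top, Fintype.range_linearCombination, hspan]
  let Ψ : ((Fin k → S) × A) →ₗ[S] A := φt.coprod (-(LinearMap.mulLeft S t))
  have hΨ : ∀ c a, Ψ (c, a) = φt c - t * a := by
    intro c a; simp [Ψ, sub_eq_add_neg]
  have hΨs : Function.Surjective Ψ := by
    intro x
    obtain ⟨c, hc⟩ := hφs (π x)
    have : π (φt c - x) = 0 := by rw [map_sub, hφ, hc, sub_self]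
    obtain ⟨a, ha⟩ := (hker _).1 this
    exact ⟨(c, a), by rw [hΨ, ← ha]; ring⟩
  obtain ⟨s, hs⟩ := Module.projective_lifting_property Ψ LinearMap.id hΨs
  have hs' : ∀ x, Ψ (s x) = x := fun x => LinearMap.congr_fun hs x
  let K := LinearMap.ker φ
  let ω : ((Fin k → S) × A) →ₗ[S] (Fin k → S) :=
    (LinearMap.fst S _ _) ∘ₗ (LinearMap.id - s ∘ₗ Ψ)
  have hω : ∀ u, ω u ∈ K := by
    intro u
    have h1 : Ψ (u - s (Ψ u)) = 0 := by rw [map_sub, hs', sub_self]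
    have h2 : ω u = (u - s (Ψ u)).1 := rfl
    rw [LinearMap.mem_ker, h2, ← hφ]
    rw [show u - s (Ψ u) = ((u - s (Ψ u)).1, (u - s (Ψ u)).2) from rfl, hΨ, sub_eq_zero] at h1
    exact (hker _).2 ⟨_, h1⟩
  have hKle : K ≤ I • K := by
    intro c hc
    have hc0 : φ c = 0 := hc
    have hcI : ∀ j, c j ∈ I := hli c (by simpa [φ, Fintype.linearCombination_apply] using hc0)
    obtain ⟨a, ha⟩ := (hker (φt c)).1 (by rw [hφ, hc0])
    have hcI' : c ∈ I • (⊤ : Submodule S (Fin k → S)) := by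
      rw [pi_eq_sum_univ' c]
      refine Submodule.sum_mem _ fun j _ => ?_
      exact Submodule.smul_mem_smul (hcI j) trivial
    have haI : a ∈ I • (⊤ : Submodule S A) := by
      apply hreg
      rw [← ha]
      have := Submodule.mem_map_of_mem (f := φt) hcI'
      rw [Submodule.map_smul''] at this
      exact Submodule.smul_mono le_rfl le_top this
    have hca : (c, a) ∈ I • (⊤ : Submodule S ((Fin k → S) × A)) := by
      have h1 := Submodule.mem_map_of_mem (f := LinearMap.inl S (Fin k → S) A) hcI'
      have h2 := Submodule.mem_map_of_mem (f := LinearMap.inr S (Fin k → S) A) haI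
      rw [Submodule.map_smul''] at h1 h2
      have := Submodule.add_mem _ (Submodule.smul_mono le_rfl le_top h1)
        (Submodule.smul_mono le_rfl le_top h2)
      simpa using this
    have h3 := Submodule.mem_map_of_mem (f := ω) hca
    rw [Submodule.map_smul''] at h3
    have h4 : ω (c, a) = c := by
      have : Ψ (c, a) = 0 := by rw [hΨ, ha, sub_self]
      simp [ω, this]
    rw [h4] at h3
    refine Submodule.smul_mono le_rfl ?_ h3
    rintro _ ⟨u, -, rfl⟩
    exact hω u
  obtain ⟨r, hr, hrK⟩ := Submodule.exists_sub_one_mem_and_smul_eq_zero_of_fg_of_le_smul I K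
    (IsNoetherian.noetherian K) hKle
  have hr0 : r ≠ 0 := by
    rintro rfl
    rw [hI, mem_idealX] at hr
    simp at hr
  have hinj : Function.Injective φ := by
    rw [← LinearMap.ker_eq_bot, eq_bot_iff]
    intro c hc
    exact (smul_eq_zero.1 (hrK c hc)).resolve_left hr0
  let e := LinearEquiv.ofBijective φ ⟨hinj, hφs⟩
  exact ⟨Module.Free.of_equiv e, Module.Finite.equiv e⟩

lemma smul_top_idealX {L A : Type*} [CommRing L] [CommRing A] {m : ℕ}
    [Algebra (MvPolynomial (Fin m) L) A] (x : A) :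
    x ∈ (Ideal.span (Set.range (X : Fin m → MvPolynomial (Fin m) L))) •
        (⊤ : Submodule (MvPolynomial (Fin m) L) A) ↔
    x ∈ Ideal.span (Set.range fun i => algebraMap (MvPolynomial (Fin m) L) A (X i)) := by
  rw [Ideal.smul_top_eq_map, Ideal.map_span, ← Set.range_comp]
  rfl

lemma aux_reg {L A : Type*} [CommRing L] [IsDomain L] [CommRing A] {m : ℕ}
    [Algebra (MvPolynomial (Fin m) L) A] [Module.Free (MvPolynomial (Fin m) L) A]
    (t : A) (l : L) (hl : l ≠ 0)
    (hmem : algebraMap (MvPolynomial (Fin m) L) A (C l) ∈ Ideal.span {t} ⊔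
      Ideal.span (Set.range fun i => algebraMap (MvPolynomial (Fin m) L) A (X i)))
    (a : A)
    (hta : t * a ∈ Ideal.span (Set.range fun i => algebraMap (MvPolynomial (Fin m) L) A (X i))) :
    a ∈ Ideal.span (Set.range fun i => algebraMap (MvPolynomial (Fin m) L) A (X i)) := by
  have h1 : (C l : MvPolynomial (Fin m) L) • a ∈
      Ideal.span (Set.range fun i => algebraMap (MvPolynomial (Fin m) L) A (X i)) := by
    rw [Algebra.smul_def]
    obtain ⟨u, hu, v, hv, huv⟩ := Submodule.mem_sup.1 hmem
    obtain ⟨y, rfl⟩ := Ideal.mem_span_singleton'.1 hu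
    rw [← huv, add_mul]
    refine Ideal.add_mem _ ?_ (Ideal.mul_mem_right _ _ hv)
    rw [mul_assoc]
    exact Ideal.mul_mem_left _ _ hta
  rw [← smul_top_idealX] at h1 ⊢
  let b := Module.Free.chooseBasis (MvPolynomial (Fin m) L) A
  rw [← b.linearCombination_repr a, Finsupp.linearCombination_apply]
  refine Submodule.sum_mem _ fun i _ => Submodule.smul_mem_smul ?_ trivial
  have h2 := Submodule.mem_map_of_mem (f := b.coord i) h1
  rw [Submodule.map_smul''] at h2
  have h3 : b.coord i ((C l : MvPolynomial (Fin m) L) • a) ∈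
      Ideal.span (Set.range (X : Fin m → MvPolynomial (Fin m) L)) := by
    have := Submodule.smul_mono le_rfl le_top h2
    simpa using this
  rw [mem_idealX] at h3 ⊢
  simpa [hl] using h3

lemma aux_fin {F D : Type*} [Field F] [CommRing D] {m : ℕ}
    (χ : MvPolynomial (Fin m) (Polynomial F) →+* D) (hχ : χ.Finite)
    (hX : ∀ i, χ (X i) = 0) (l : Polynomial F) (hl : l ≠ 0) (hlD : χ (C l) = 0) :
    (χ.comp (C.comp Polynomial.C)).Finite := by
  have h1 : χ = (χ.comp C).comp constantCoeff := by
    refine MvPolynomial.ringHom_ext ?_ ?_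
    · intro r; simp
    · intro i; simp [hX]
  rw [h1] at hχ
  have h2 : (χ.comp C).Finite := RingHom.Finite.of_comp_finite hχ
  let κ : AdjoinRoot l →+* D := Ideal.Quotient.lift (Ideal.span {l}) (χ.comp C) (by
    intro a ha
    obtain ⟨y, rfl⟩ := Ideal.mem_span_singleton'.1 ha
    simp [hlD])
  have h3 : χ.comp C = κ.comp (AdjoinRoot.mk l) := by
    ext x
    · rfl
    · rfl
  rw [h3] at h2
  have h4 : κ.Finite := RingHom.Finite.of_comp_finite h2
  have h5 : (algebraMap F (AdjoinRoot l)).Finite := by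
    rw [RingHom.finite_algebraMap]
    exact (AdjoinRoot.powerBasis hl).finite
  have h6 := h4.comp h5
  convert h6
  rw [← RingHom.comp_assoc, h3, RingHom.comp_assoc]
  rfl

lemma aux_span {F : Type*} [Field F] {n m : ℕ} (R : Subalgebra F (MvPolynomial (Fin n) F))
    (hcl : ∀ p ∈ R, ∀ d, homogeneousComponent d p ∈ R)
    (g : Fin m → R)
    (hg : ∀ i, ∃ d : ℕ, 0 < d ∧ (g i : MvPolynomial (Fin n) F).IsHomogeneous d)
    [Algebra (MvPolynomial (Fin m) F) R]
    (halg : ∀ s, algebraMap (MvPolynomial (Fin m) F) R s = aeval g s)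
    {D : Type*} [CommRing D] [Algebra F D] (hfin : Module.Finite F D) (mk : R →ₐ[F] D)
    (hmks : Function.Surjective mk) (hmk : ∀ x, mk x = 0 ↔ x ∈ Ideal.span (Set.range g)) :
    ∃ (k : ℕ) (b : Fin k → R), Submodule.span (MvPolynomial (Fin m) F) (Set.range b) = ⊤ ∧
      (∀ c : Fin k → MvPolynomial (Fin m) F, ∑ j, c j • b j = 0 →
      ∀ j, c j ∈ Ideal.span (Set.range (X : Fin m → MvPolynomial (Fin m) F))) := by
  classical
  set J := Ideal.span (Set.range g) with hJ
  let hc : ℕ → R → R := fun d x => ⟨homogeneousComponent d (x : MvPolynomial (Fin n) F), hcl _ x.2 d⟩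
  have hsum : ∀ x : R, x = ∑ d ∈ Finset.range ((x : MvPolynomial (Fin n) F).totalDegree + 1), hc d x := by
    intro x
    apply Subtype.ext
    rw [AddSubmonoidClass.coe_finsetSum]
    exact (sum_homogeneousComponent _).symm
  let H : Set R := {r | ∃ d, (r : MvPolynomial (Fin n) F).IsHomogeneous d}
  have hcH : ∀ d x, hc d x ∈ H := fun d x => ⟨d, homogeneousComponent_isHomogeneous _ _⟩
  have hHspan : Submodule.span F H = ⊤ := by
    rw [eq_top_iff]
    intro x _
    rw [hsum x]
    exact Submodule.sum_mem _ fun d _ => Submodule.subset_span (hcH d x)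
  obtain ⟨B, hBH, hBspan, hBli⟩ := exists_linearIndependent F (mk '' H)
  have hBtop : Submodule.span F B = ⊤ := by
    rw [hBspan]
    have : Submodule.map mk.toLinearMap (Submodule.span F H) = Submodule.span F (mk '' H) :=
      Submodule.map_span _ _
    rw [← this, hHspan, Submodule.map_top, LinearMap.range_eq_top]
    exact hmks
  have hBfin : Finite B := hBli.finite
  obtain ⟨k, ⟨eB⟩⟩ := Finite.exists_equiv_fin B
  have hlift : ∀ j : Fin k, ∃ r : R, r ∈ H ∧ mk r = (eB.symm j : D) := by
    intro j
    obtain ⟨r, hr, hr'⟩ := hBH (eB.symm j).2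
    exact ⟨r, hr, hr'⟩
  choose b hbH hb using hlift
  have hli : LinearIndependent F (fun j => mk (b j)) := by
    have := hBli.comp eB.symm eB.symm.injective
    have heq : (fun j => mk (b j)) = Subtype.val ∘ eB.symm := funext hb
    rw [heq]
    exact this
  have htop : Submodule.span F (Set.range fun j => mk (b j)) = ⊤ := by
    rw [← hBtop]
    congr 1
    ext x
    constructor
    · rintro ⟨j, rfl⟩
      simp only [hb]; exact (eB.symm j).2
    · intro hx
      exact ⟨eB ⟨x, hx⟩, by simp [hb]⟩
  refine ⟨k, b, ?_, ?_⟩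
  · set W := Submodule.span (MvPolynomial (Fin m) F) (Set.range b) with hW
    have hWb : ∀ j, b j ∈ W := fun j => Submodule.subset_span ⟨j, rfl⟩
    have hWg : ∀ i, ∀ x ∈ W, x * g i ∈ W := by
      intro i x hx
      have := W.smul_mem (X i) hx
      rwa [Algebra.smul_def, halg, aeval_X, mul_comm] at this
    have hWF : ∀ (c : F), ∀ x ∈ W, c • x ∈ W := by
      intro c x hx
      have := W.smul_mem (C c) hx
      rwa [Algebra.smul_def, halg, aeval_C, ← Algebra.smul_def] at this
    choose dg hdg0 hdg using hg
    have key : ∀ d, ∀ x : R, hc d x ∈ W := by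
      intro d
      induction d using Nat.strong_induction_on with
      | _ d ih =>
      intro x
      have hx : mk x ∈ Submodule.span F (Set.range fun j => mk (b j)) := by rw [htop]; trivial
      obtain ⟨c, hc'⟩ := (Submodule.mem_span_range_iff_exists_fun F).1 hx
      have hx2 : x - ∑ j, c j • b j ∈ J := by
        rw [← hmk, map_sub, map_sum, ← hc']
        simp
      obtain ⟨h, hh⟩ := (Ideal.mem_span_range_iff_exists_fun).1 hx2
      have hx3 : x = ∑ j, c j • b j + ∑ i, h i * g i := by rw [hh]; ring
      let hcl : R →ₗ[F] R :=
        { toFun := hc d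
          map_add' := fun x y => Subtype.ext (by simp [hc])
          map_smul' := fun r x => Subtype.ext (by simp [hc]) }
      show hcl x ∈ W
      rw [hx3, map_add, map_sum, map_sum]
      have hhom : ∀ (y : R) (e : ℕ), (y : MvPolynomial (Fin n) F).IsHomogeneous e →
          hcl y = if d = e then y else 0 := by
        intro y e hy
        apply Subtype.ext
        show homogeneousComponent d (y : MvPolynomial (Fin n) F) = _
        rw [homogeneousComponent_of_mem ((mem_homogeneousSubmodule _ _).2 hy)]
        by_cases hde : d = e <;> simp [hde]
      refine W.add_mem (W.sum_mem fun j _ => ?_) (W.sum_mem fun i _ => ?_)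
      · rw [map_smul]
        apply hWF
        obtain ⟨e, he⟩ := hbH j
        rw [hhom _ e he]
        split_ifs
        · exact hWb j
        · exact W.zero_mem
      · rw [hsum (h i), Finset.sum_mul, map_sum]
        refine W.sum_mem fun e _ => ?_
        rw [hhom _ (e + dg i) ((homogeneousComponent_isHomogeneous _ _).mul (hdg i))]
        split_ifs with hde
        · exact hWg i _ (ih e (by have := hdg0 i; omega) _)
        · exact W.zero_mem
    rw [eq_top_iff]
    intro x _
    rw [hsum x]
    exact W.sum_mem fun d _ => key d x
  · intro c hc0 j
    have hcc : ∀ s : MvPolynomial (Fin m) F, mk (aeval g s) = algebraMap F _ (constantCoeff s) := by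
      intro s
      have : mk.comp (aeval g) = (Algebra.ofId F (D)).comp (aeval (fun _ => (0 : F))) := by
        ext i
        simp only [AlgHom.comp_apply, aeval_X, map_zero]
        exact (hmk _).2 (Ideal.subset_span ⟨i, rfl⟩)
      have h2 := DFunLike.congr_fun this s
      rw [AlgHom.comp_apply] at h2
      rw [h2]
      simp [constantCoeff, Algebra.ofId_apply]
    have h1 : ∑ j, constantCoeff (c j) • mk (b j) = 0 := by
      have := congrArg mk hc0
      rw [map_sum, map_zero] at this
      rw [← this]
      refine Finset.sum_congr rfl fun j _ => ?_
      rw [Algebra.smul_def (c j), halg, map_mul, hcc, Algebra.smul_def]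
    rw [mem_idealX]
    exact Fintype.linearIndependent_iff.1 hli _ h1 j

lemma FFree_algebraMap {R S : Type*} [CommRing R] [CommRing S] [inst : Algebra R S] :
    FFree (algebraMap R S) ↔ (Module.Free R S ∧ Module.Finite R S) := by
  have e : (algebraMap R S).toAlgebra = inst := by
    apply Algebra.algebra_ext
    intro r; rfl
  unfold FFree
  rw [e]

lemma FFree.injective {R S : Type*} [CommRing R] [CommRing S] [Nontrivial S] {f : R →+* S}
    (h : FFree f) : Function.Injective f := by
  letI := f.toAlgebra
  obtain ⟨h1, -⟩ := h
  let b := Module.Free.chooseBasis R S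
  obtain ⟨i⟩ := b.index_nonempty
  rw [injective_iff_map_eq_zero]
  intro r hr
  have h2 : r • b i = 0 := by
    rw [Algebra.smul_def]
    show f r * _ = 0
    rw [hr, zero_mul]
  have := congrArg (fun x => b.repr x i) h2
  simpa using this

lemma FFree_aeval_iff {F T : Type*} [Field F] [CommRing T] [Algebra F T] {n : ℕ} (f : Fin n → T)
    (hf : AlgebraicIndependent F f) :
    FFree ((aeval f : MvPolynomial (Fin n) F →ₐ[F] T) : MvPolynomial (Fin n) F →+* T) ↔
    (Module.Free (Algebra.adjoin F (Set.range f)) T ∧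
      Module.Finite (Algebra.adjoin F (Set.range f)) T) := by
  rw [← FFree_algebraMap]
  have key : (algebraMap (Algebra.adjoin F (Set.range f)) T).comp
      (hf.aevalEquiv.toRingEquiv : MvPolynomial (Fin n) F →+* Algebra.adjoin F (Set.range f)) =
      ((aeval f : MvPolynomial (Fin n) F →ₐ[F] T) : MvPolynomial (Fin n) F →+* T) := by
    ext x
    · simp
    · simp
  rw [← key]
  constructor
  · intro h
    exact FFree.of_equiv hf.aevalEquiv.toRingEquiv h
  · intro h
    exact FFree.comp (FFree.equiv hf.aevalEquiv.toRingEquiv) h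

lemma isCM_iff {F : Type*} [Field F] {n : ℕ} (R : Subalgebra F (MvPolynomial (Fin n) F)) :
    IsCM R ↔ ∃ f : Fin n → R,
      (∀ i, ∃ d : ℕ, 0 < d ∧ (f i : MvPolynomial (Fin n) F).IsHomogeneous d) ∧
      FFree ((aeval f : MvPolynomial (Fin n) F →ₐ[F] R) : MvPolynomial (Fin n) F →+* R) := by
  constructor
  · rintro ⟨f, ⟨hf, hh, hfin⟩, hfree⟩
    exact ⟨f, hh, (FFree_aeval_iff f hf).2 ⟨hfree, hfin⟩⟩
  · rintro ⟨f, hh, hF⟩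
    have hf : AlgebraicIndependent F f := hF.injective
    have := (FFree_aeval_iff f hf).1 hF
    exact ⟨f, ⟨hf, hh, this.2⟩, this.1⟩

/-- Change of parameters in an abstract ring. -/
lemma fwd_phi {F A : Type*} [Field F] [CommRing A] [IsDomain A] [Algebra F A] {m : ℕ}
    (y : Fin (m+1) → A) (d : Fin (m+1) → ℕ) (hd0 : ∀ i, 0 < d i)
    (hyF : FFree ((aeval y : MvPolynomial (Fin (m+1)) F →ₐ[F] A) :
      MvPolynomial (Fin (m+1)) F →+* A))
    (t : A) (ht : t ≠ 0) :
    ∃ (Φ : MvPolynomial (Fin m) (Polynomial F) →+* A) (p : Fin m → Polynomial F)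
      (l : Polynomial F), FFree Φ ∧ l ≠ 0 ∧ (∀ i, 0 < (p i).natDegree) ∧
      (∀ c, Φ (C (Polynomial.C c)) = algebraMap F A c) ∧
      (∀ i, Φ (X i) = ∑ k ∈ Finset.range ((p i).natDegree + 1),
        algebraMap F A ((p i).coeff k) * y 0 ^ (d i.succ * ((p i).natDegree - k)) *
          y i.succ ^ (d 0 * k)) ∧
      Φ (C l) ∈ Ideal.span {t} ⊔ Ideal.span (Set.range fun i => Φ (X i)) := by
  let E : MvPolynomial (Fin (m+1)) F ≃ₐ[F] MvPolynomial (Fin m) (Polynomial F) :=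
    (renameEquiv F (_root_.finSuccEquiv m)).trans (optionEquivRight F (Fin m))
  have hE0 : E (X 0) = C Polynomial.X := by
    simp [E]
  have hEs : ∀ i : Fin m, E (X i.succ) = X i := by
    intro i; simp [E]
  clear_value E
  have hcF := FFree.comp (FFree.equiv E.symm.toRingEquiv) hyF
  obtain ⟨Φ0, hΦ0, hΦX, hΦw, hΦc⟩ : ∃ Φ0 : MvPolynomial (Fin m) (Polynomial F) →+* A,
      FFree Φ0 ∧ (∀ i, Φ0 (X i) = y i.succ) ∧ Φ0 (C Polynomial.X) = y 0 ∧
      (∀ c, Φ0 (C (Polynomial.C c)) = algebraMap F A c) := by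
    refine ⟨_, hcF, ?_, ?_, ?_⟩
    · intro i
      show aeval y (E.symm (X i)) = _
      rw [← hEs]
      simp
    · show aeval y (E.symm _) = _
      rw [← hE0]
      simp
    · intro c
      have h1 : (C (Polynomial.C c) : MvPolynomial (Fin m) (Polynomial F)) = algebraMap F _ c := rfl
      show aeval y (E.symm (C (Polynomial.C c))) = _
      rw [h1, E.symm.commutes, AlgHom.commutes]
  obtain ⟨δ, hδ, hδ0⟩ : ∃ δ, Φ0 δ ∈ Ideal.span {t} ∧ δ ≠ 0 := by
    letI := Φ0.toAlgebra
    obtain ⟨-, hfin⟩ := hΦ0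
    have h := Ideal.comap_ne_bot_of_integral_mem (R := MvPolynomial (Fin m) (Polynomial F))
      (I := Ideal.span {t}) ht (Ideal.subset_span rfl) (Algebra.IsIntegral.isIntegral t)
    obtain ⟨δ, h1, h2⟩ := Submodule.exists_mem_ne_zero_of_ne_bot h
    exact ⟨δ, h1, h2⟩
  obtain ⟨p, hp, l, hl, hmem⟩ := aux_elim_mv (F := F) (d 0) m (fun i => d i.succ) δ hδ0
  set g : Fin m → Polynomial (Polynomial F) := fun i =>
    hgPoly Polynomial.C Polynomial.X (d 0) (d i.succ) (p i) with hg
  have hgm : ∀ i, (g i).Monic := fun i => (hgPoly_monic _ _ _ _ (hd0 0) _ (hp i).1).1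
  have hgd : ∀ i, 0 < (g i).natDegree := by
    intro i
    rw [hg, (hgPoly_monic _ _ _ _ (hd0 0) _ (hp i).1).2 inferInstance]
    exact Nat.mul_pos (hd0 0) (hp i).2
  have hθ := FFree.theta m g hgm hgd
  obtain ⟨θ, hθF, hθX, hθC⟩ : ∃ θ : MvPolynomial (Fin m) (Polynomial F) →+*
      MvPolynomial (Fin m) (Polynomial F), FFree θ ∧
      (∀ i, θ (X i) = Polynomial.aeval (X i) (g i)) ∧ ∀ q, θ (C q) = C q := by
    refine ⟨_, hθ, ?_, ?_⟩
    · intro i; simp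
    · intro q; simp
  have hΦX' : ∀ i, (Φ0.comp θ) (X i) = Φ0 (Polynomial.aeval (X i) (g i)) := by
    intro i
    rw [RingHom.comp_apply, hθX]
  have hΦC' : ∀ q, (Φ0.comp θ) (C q) = Φ0 (C q) := by
    intro q
    rw [RingHom.comp_apply, hθC]
  refine ⟨Φ0.comp θ, p, l, hθF.comp hΦ0, hl, fun i => (hp i).2, ?_, ?_, ?_⟩
  · intro c
    rw [hΦC', hΦc]
  · intro i
    rw [hΦX', hg]
    simp only [hgPoly, map_sum, map_mul, map_pow, Polynomial.aeval_C, Polynomial.aeval_X, hΦX,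
      MvPolynomial.algebraMap_eq, hΦw, hΦc]
  · rw [hΦC']
    have hle : Ideal.span {δ} ⊔ Ideal.span (Set.range fun i =>
        Polynomial.aeval (X i : MvPolynomial (Fin m) (Polynomial F)) (g i)) ≤
        Ideal.comap Φ0 (Ideal.span {t} ⊔ Ideal.span (Set.range fun i => (Φ0.comp θ) (X i))) := by
      refine sup_le ?_ ?_
      · rw [Ideal.span_le]
        rintro x rfl
        exact Ideal.mem_sup_left hδ
      · rw [Ideal.span_le]
        rintro x ⟨i, rfl⟩
        exact Ideal.mem_sup_right (Ideal.subset_span ⟨i, hΦX' i⟩)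
    exact hle hmem

lemma fwd_fin {F A R : Type*} [Field F] [CommRing A] [CommRing R] [Algebra F A] [Algebra F R]
    {m : ℕ} (Φ : MvPolynomial (Fin m) (Polynomial F) →+* A) (hΦ : FFree Φ) (l : Polynomial F)
    (hl : l ≠ 0) (hΦc : ∀ c, Φ (C (Polynomial.C c)) = algebraMap F A c)
    (t : A) (hlmem : Φ (C l) ∈ Ideal.span {t} ⊔ Ideal.span (Set.range fun i => Φ (X i)))
    (π : A →ₐ[F] R) (hπ : Function.Surjective π) (hπt : π t = 0) :
    Module.Finite F (R ⧸ Ideal.span (Set.range fun i => π (Φ (X i)))) := by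
  set J : Ideal R := Ideal.span (Set.range fun i => π (Φ (X i))) with hJ
  let η : A →+* R ⧸ J := (Ideal.Quotient.mk J).comp (π : A →+* R)
  have hη : ∀ x, η x = Ideal.Quotient.mk J (π x) := fun x => rfl
  have hχ : (η.comp Φ).Finite := by
    refine RingHom.Finite.comp (RingHom.Finite.of_surjective _ ?_) hΦ.2
    exact Ideal.Quotient.mk_surjective.comp hπ
  have hχX : ∀ i, (η.comp Φ) (X i) = 0 := fun i =>
    Ideal.Quotient.eq_zero_iff_mem.2 (Ideal.subset_span ⟨i, rfl⟩)
  have hχl : (η.comp Φ) (C l) = 0 := by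
    have hle : Ideal.span {t} ⊔ Ideal.span (Set.range fun i => Φ (X i)) ≤ RingHom.ker η := by
      refine sup_le ?_ ?_
      · rw [Ideal.span_le]
        rintro x rfl
        show η x = 0
        rw [hη, hπt, map_zero]
      · rw [Ideal.span_le]
        rintro x ⟨i, rfl⟩
        exact hχX i
    exact hle hlmem
  have := aux_fin (η.comp Φ) hχ hχX l hl hχl
  rw [← RingHom.finite_algebraMap]
  have e : algebraMap F (R ⧸ J) = (η.comp Φ).comp (C.comp Polynomial.C) := by
    ext c
    show _ = Ideal.Quotient.mk J (π (Φ (C (Polynomial.C c))))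
    rw [hΦc, AlgHom.commutes]
    rfl
  rw [e]
  exact this

lemma fwd_free {F A R : Type*} [Field F] [CommRing A] [CommRing R] [Algebra F A] [Algebra F R]
    {m : ℕ} (Φ : MvPolynomial (Fin m) (Polynomial F) →+* A) (hΦ : FFree Φ) (l : Polynomial F)
    (hl : l ≠ 0) (hΦc : ∀ c, Φ (C (Polynomial.C c)) = algebraMap F A c)
    (t : A) (hlmem : Φ (C l) ∈ Ideal.span {t} ⊔ Ideal.span (Set.range fun i => Φ (X i)))
    (π : A →ₐ[F] R) (hπ : Function.Surjective π) (hker : ∀ x, π x = 0 ↔ ∃ a, x = t * a)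
    [Algebra (MvPolynomial (Fin m) F) R]
    (halg : ∀ s, algebraMap (MvPolynomial (Fin m) F) R s = aeval (fun i => π (Φ (X i))) s)
    (k : ℕ) (b : Fin k → R)
    (hspan : Submodule.span (MvPolynomial (Fin m) F) (Set.range b) = ⊤)
    (hli : ∀ c : Fin k → MvPolynomial (Fin m) F, ∑ j, c j • b j = 0 →
      ∀ j, c j ∈ Ideal.span (Set.range (X : Fin m → MvPolynomial (Fin m) F))) :
    Module.Free (MvPolynomial (Fin m) F) R ∧ Module.Finite (MvPolynomial (Fin m) F) R := by
  letI : Algebra (MvPolynomial (Fin m) F) (MvPolynomial (Fin m) (Polynomial F)) :=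
    MvPolynomial.algebraMvPolynomial
  letI : Algebra (MvPolynomial (Fin m) (Polynomial F)) A := Φ.toAlgebra
  letI : Algebra (MvPolynomial (Fin m) F) A := (Φ.comp (algebraMap (MvPolynomial (Fin m) F) (MvPolynomial (Fin m) (Polynomial F)))).toAlgebra
  haveI : IsScalarTower (MvPolynomial (Fin m) F) (MvPolynomial (Fin m) (Polynomial F)) A :=
    IsScalarTower.of_algebraMap_eq fun x => rfl
  obtain ⟨hQA1, hQA2⟩ : Module.Free (MvPolynomial (Fin m) (Polynomial F)) A ∧
    Module.Finite (MvPolynomial (Fin m) (Polynomial F)) A := hΦ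
  haveI : Module.Free (MvPolynomial (Fin m) F) (MvPolynomial (Fin m) (Polynomial F)) := by
    have hb : Algebra.IsPushout F (MvPolynomial (Fin m) F) (Polynomial F) (MvPolynomial (Fin m) (Polynomial F)) := inferInstance
    exact hb.out.free
  haveI : Module.Free (MvPolynomial (Fin m) F) A := Module.Free.trans (R := MvPolynomial (Fin m) F)
    (S := MvPolynomial (Fin m) (Polynomial F)) (M := A)
  have hSX : ∀ i, algebraMap (MvPolynomial (Fin m) F) A (X i) = Φ (X i) := by
    intro i
    show Φ (MvPolynomial.map _ (X i)) = _
    rw [map_X]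
  have hcompat : ∀ s : MvPolynomial (Fin m) F, π (algebraMap (MvPolynomial (Fin m) F) A s) = algebraMap (MvPolynomial (Fin m) F) R s := by
    intro s
    rw [halg]
    have : (π : A →+* R).comp (algebraMap (MvPolynomial (Fin m) F) A) =
        ((aeval (fun i => π (Φ (X i))) : MvPolynomial (Fin m) F →ₐ[F] R) : MvPolynomial (Fin m) F →+* R) := by
      refine MvPolynomial.ringHom_ext ?_ ?_
      · intro r
        show π (Φ (MvPolynomial.map _ (C r))) = aeval _ (C r)
        rw [map_C, aeval_C, Polynomial.algebraMap_eq, hΦc, AlgHom.commutes]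
      · intro i
        show π (algebraMap (MvPolynomial (Fin m) F) A (X i)) = aeval _ (X i)
        rw [hSX, aeval_X]
    exact DFunLike.congr_fun this s
  let πl : A →ₗ[MvPolynomial (Fin m) F] R :=
    { toFun := π
      map_add' := map_add π
      map_smul' := fun s a => by
        rw [Algebra.smul_def, Algebra.smul_def, map_mul, hcompat]; rfl }
  refine aux_free (F := F) (m := m) πl hπ t hker ?_ b hspan hli
  intro a ha
  rw [smul_top_idealX] at ha ⊢
  simp only [hSX] at ha ⊢
  exact aux_reg t l hl hlmem a ha

lemma aux_forward {F : Type*} [Field F] {m : ℕ} (A : Subalgebra F (MvPolynomial (Fin (m+1)) F))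
    (R : Subalgebra F (MvPolynomial (Fin m) F))
    (hcl : ∀ p ∈ R, ∀ d, homogeneousComponent d p ∈ R)
    (π : A →ₐ[F] R) (hπ : Function.Surjective π)
    (hπh : ∀ (a : A) (d : ℕ), (a : MvPolynomial (Fin (m+1)) F).IsHomogeneous d →
      (π a : MvPolynomial (Fin m) F).IsHomogeneous d)
    (t : A) (ht : t ≠ 0) (hker : ∀ x, π x = 0 ↔ ∃ a, x = t * a) (hA : IsCM A) : IsCM R := by
  rw [isCM_iff] at hA ⊢
  obtain ⟨y, hy, hyF⟩ := hA
  choose d hd0 hd using hy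
  obtain ⟨Φ, p, l, hΦF, hl, hp, hΦc, hΦX, hlmem⟩ := fwd_phi y d hd0 hyF t ht
  have hhom : ∀ i, ((Φ (X i) : A) : MvPolynomial (Fin (m+1)) F).IsHomogeneous
      (d 0 * d i.succ * (p i).natDegree) := by
    intro i
    rw [hΦX, AddSubmonoidClass.coe_finsetSum]
    refine IsHomogeneous.sum _ _ _ fun k hk => ?_
    have hk' : k ≤ (p i).natDegree := by rw [Finset.mem_range] at hk; omega
    obtain ⟨c, hc⟩ := Nat.exists_eq_add_of_le hk'
    have h1 := ((isHomogeneous_C (Fin (m+1)) ((p i).coeff k)).mul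
      ((hd 0).pow (d i.succ * ((p i).natDegree - k)))).mul ((hd i.succ).pow (d 0 * k))
    have h2 : 0 + d 0 * (d i.succ * ((p i).natDegree - k)) + d i.succ * (d 0 * k)
        = d 0 * d i.succ * (p i).natDegree := by
      rw [hc, Nat.add_sub_cancel_left]; ring
    rw [h2] at h1
    exact h1
  have hgb : ∀ i, ∃ d : ℕ, 0 < d ∧ (π (Φ (X i)) : MvPolynomial (Fin m) F).IsHomogeneous d :=
    fun i => ⟨_, Nat.mul_pos (Nat.mul_pos (hd0 0) (hd0 i.succ)) (hp i), hπh _ _ (hhom i)⟩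
  refine ⟨fun i => π (Φ (X i)), hgb, ?_⟩
  have hfinD := fwd_fin Φ hΦF l hl hΦc t hlmem π hπ ((hker t).2 ⟨1, (mul_one t).symm⟩)
  letI : Algebra (MvPolynomial (Fin m) F) R :=
    ((aeval (fun i => π (Φ (X i))) : MvPolynomial (Fin m) F →ₐ[F] R) : _ →+* R).toAlgebra
  obtain ⟨k, b, hb1, hb2⟩ := aux_span R hcl (fun i => π (Φ (X i))) hgb (fun s => rfl) hfinD
    (Ideal.Quotient.mkₐ F (Ideal.span (Set.range fun i => π (Φ (X i)))))
    Ideal.Quotient.mk_surjective (fun x => Ideal.Quotient.eq_zero_iff_mem)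
  exact fwd_free Φ hΦF l hl hΦc t hlmem π hπ hker (fun s => rfl) k b hb1 hb2

/-- Linear form. -/
noncomputable def linForm {F : Type*} [Field F] {b : ℕ} (v : Fin b → F) :
    MvPolynomial (Fin b) F := ∑ j, v j • X j

/-- Linear substitution. -/
noncomputable def linSub {F : Type*} [Field F] {a b : ℕ} (M : Matrix (Fin a) (Fin b) F) :
    MvPolynomial (Fin a) F →ₐ[F] MvPolynomial (Fin b) F :=
  aeval (fun i => linForm (M i))

lemma linForm_hom {F : Type*} [Field F] {b : ℕ} (v : Fin b → F) : (linForm v).IsHomogeneous 1 := by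
  refine IsHomogeneous.sum _ _ _ fun j _ => ?_
  rw [smul_eq_C_mul]
  simpa using (isHomogeneous_C (Fin b) (v j)).mul (isHomogeneous_X F j)

lemma linForm_ne {F : Type*} [Field F] {b : ℕ} (v : Fin b → F) (hv : v ≠ 0) : linForm v ≠ 0 := by
  classical
  intro h
  apply hv
  ext i
  have := congrArg (coeff (Finsupp.single i 1)) h
  simpa [linForm, coeff_sum, coeff_X', Finsupp.single_left_inj] using this

lemma linForm_add {F : Type*} [Field F] {b : ℕ} (v w : Fin b → F) :
    linForm (v + w) = linForm v + linForm w := by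
  simp [linForm, add_smul, Finset.sum_add_distrib]

lemma linForm_smul {F : Type*} [Field F] {b : ℕ} (c : F) (w : Fin b → F) :
    linForm (c • w) = c • linForm w := by
  simp [linForm, Finset.smul_sum, smul_smul]

lemma linForm_zero {F : Type*} [Field F] {b : ℕ} : linForm (0 : Fin b → F) = 0 := by
  simp [linForm]

lemma linSub_linForm {F : Type*} [Field F] {a b : ℕ} (M : Matrix (Fin a) (Fin b) F)
    (v : Fin a → F) : linSub M (linForm v) = linForm (Matrix.vecMul v M) := by
  simp only [linForm, linSub, map_sum, map_smul, aeval_X, Finset.smul_sum, smul_smul,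
    Matrix.vecMul, dotProduct, Finset.sum_smul]
  rw [Finset.sum_comm]

lemma linSub_X {F : Type*} [Field F] {a b : ℕ} (M : Matrix (Fin a) (Fin b) F) (i : Fin a) :
    linSub M (X i) = linForm (M i) := by simp [linSub]

lemma linSub_comp {F : Type*} [Field F] {a b c : ℕ} (M : Matrix (Fin a) (Fin b) F)
    (N : Matrix (Fin b) (Fin c) F) (p : MvPolynomial (Fin a) F) :
    linSub N (linSub M p) = linSub (M * N) p := by
  have : (linSub N).comp (linSub M) = linSub (M * N) := by
    refine MvPolynomial.algHom_ext fun i => ?_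
    rw [AlgHom.comp_apply, linSub_X, linSub_X, linSub_linForm]
    rfl
  exact DFunLike.congr_fun this p

lemma linSub_one {F : Type*} [Field F] {a : ℕ} (p : MvPolynomial (Fin a) F) :
    linSub (1 : Matrix (Fin a) (Fin a) F) p = p := by
  classical
  have : linSub (1 : Matrix (Fin a) (Fin a) F) = AlgHom.id F _ := by
    refine MvPolynomial.algHom_ext fun i => ?_
    rw [linSub_X]
    simp [linForm, Matrix.one_apply, ite_smul]
  rw [this]; rfl

lemma linSub_hom {F : Type*} [Field F] {a b : ℕ} (M : Matrix (Fin a) (Fin b) F)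
    (p : MvPolynomial (Fin a) F) (d : ℕ) (hp : p.IsHomogeneous d) :
    (linSub M p).IsHomogeneous d := by
  have := hp.aeval (fun i => linForm (M i)) (n := 1) (fun i => linForm_hom _)
  simpa [linSub] using this

lemma linSub_deg {F : Type*} [Field F] {a b : ℕ} (M : Matrix (Fin a) (Fin b) F)
    (p : MvPolynomial (Fin a) F) : (linSub M p).totalDegree ≤ p.totalDegree := by
  conv_lhs => rw [← sum_homogeneousComponent p]
  rw [map_sum]
  refine totalDegree_finsetSum_le fun i hi => ?_
  refine (linSub_hom M _ i (homogeneousComponent_isHomogeneous i p)).totalDegree_le.trans ?_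
  rw [Finset.mem_range] at hi
  omega

lemma linSub_comm {F : Type*} [Field F] {a b : ℕ} (M : Matrix (Fin a) (Fin b) F)
    (p : MvPolynomial (Fin a) F) (d : ℕ) :
    homogeneousComponent d (linSub M p) = linSub M (homogeneousComponent d p) := by
  conv_lhs => rw [← sum_homogeneousComponent p]
  rw [map_sum, map_sum]
  have : ∀ k, homogeneousComponent d (linSub M (homogeneousComponent k p)) =
      if k = d then linSub M (homogeneousComponent d p) else 0 := by
    intro k
    rw [homogeneousComponent_of_mem (linSub_hom M _ k (homogeneousComponent_isHomogeneous k p))]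
    split_ifs with h1 h2 h2
    · rw [h2]
    · omega
    · omega
    · rfl
  simp only [this]
  rw [Finset.sum_ite_eq']
  split_ifs with h
  · rfl
  · rw [homogeneousComponent_eq_zero, map_zero]
    rw [Finset.mem_range] at h
    omega

lemma back_bij {A R : Type*} [CommRing A] [IsDomain A] [CommRing R] (ι : R →+* A) (π : A →+* R)
    (hπι : ∀ r, π (ι r) = r) (τ : A) (hτ : τ ≠ 0) (hker : ∀ x, π x = 0 ↔ ∃ a, x = τ * a)
    (deg : A → ℕ) (hdeg1 : ∀ x, deg (x - ι (π x)) ≤ deg x)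
    (hdeg2 : ∀ a, a ≠ 0 → deg a < deg (τ * a)) :
    Function.Bijective (Polynomial.eval₂RingHom ι τ) := by
  have hπτ : π τ = 0 := (hker τ).2 ⟨1, (mul_one τ).symm⟩
  constructor
  · rw [injective_iff_map_eq_zero]
    intro q
    induction hn : q.natDegree using Nat.strong_induction_on generalizing q with
    | _ n ih =>
    intro hq
    simp only [Polynomial.coe_eval₂RingHom] at hq ih
    rw [← Polynomial.divX_mul_X_add q] at hq
    simp only [Polynomial.eval₂_add, Polynomial.eval₂_mul, Polynomial.eval₂_X,
      Polynomial.eval₂_C] at hq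
    have h0 : q.coeff 0 = 0 := by
      have := congrArg π hq
      simpa [hπτ, hπι] using this
    rw [h0, map_zero, add_zero] at hq
    have h1 := (mul_eq_zero.1 hq).resolve_right hτ
    rcases Nat.eq_zero_or_pos n with h | h
    · rw [Polynomial.eq_C_of_natDegree_eq_zero (hn.trans h), h0, map_zero]
    · have := ih (n - 1) (by omega) q.divX (by rw [Polynomial.natDegree_divX_eq_natDegree_tsub_one, hn]) h1
      rw [← Polynomial.divX_mul_X_add q, this, h0]; simp
  · intro x
    induction hn : deg x using Nat.strong_induction_on generalizing x with
    | _ n ih =>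
    obtain ⟨a, ha⟩ := (hker (x - ι (π x))).1 (by rw [map_sub, hπι, sub_self])
    have hx : x = ι (π x) + τ * a := by rw [← ha]; ring
    by_cases h0 : a = 0
    · refine ⟨Polynomial.C (π x), ?_⟩
      simp only [Polynomial.coe_eval₂RingHom, Polynomial.eval₂_C]
      rw [hx, h0] ; simp [hπι]
    · obtain ⟨q, hq⟩ := ih (deg a) (by
        have h1 := hdeg1 x
        have h2 := hdeg2 a h0
        rw [ha] at h1
        omega) a rfl
      refine ⟨Polynomial.C (π x) + Polynomial.X * q, ?_⟩
      rw [map_add, map_mul, hq]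
      simp only [Polynomial.coe_eval₂RingHom, Polynomial.eval₂_C, Polynomial.eval₂_X]
      exact hx.symm

lemma back_free {F A R : Type*} [Field F] [CommRing A] [CommRing R] [Algebra F A] [Algebra F R]
    {m : ℕ} (ι : R →ₐ[F] A) (τ : A)
    (hb : Function.Bijective (Polynomial.eval₂RingHom (ι : R →+* A) τ)) (f : Fin m → R)
    (hf : FFree ((aeval f : MvPolynomial (Fin m) F →ₐ[F] R) : MvPolynomial (Fin m) F →+* R)) :
    FFree ((aeval (Fin.cons τ (fun i => ι (f i)) : Fin (m+1) → A) :
      MvPolynomial (Fin (m+1)) F →ₐ[F] A) : MvPolynomial (Fin (m+1)) F →+* A) := by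
  have h1 := FFree.comp (FFree.equiv (MvPolynomial.finSuccEquiv F m).toRingEquiv) hf.polyMap
  have h2 := FFree.comp h1 (FFree.equiv (RingEquiv.ofBijective _ hb))
  convert h2
  refine MvPolynomial.ringHom_ext ?_ ?_
  · intro r
    show aeval _ (C r) = Polynomial.eval₂ _ _ (Polynomial.map _ (MvPolynomial.finSuccEquiv F m (C r)))
    have hC : MvPolynomial.finSuccEquiv F m (C r) = Polynomial.C (C r) := by
      simp [finSuccEquiv_apply]
    rw [hC, Polynomial.map_C, Polynomial.eval₂_C, aeval_C]
    show _ = ι (aeval f (C r))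
    rw [aeval_C, AlgHom.commutes]
  · intro i
    show aeval _ (X i) = Polynomial.eval₂ _ _ (Polynomial.map _ (MvPolynomial.finSuccEquiv F m (X i)))
    rw [aeval_X]
    refine Fin.cases ?_ (fun i => ?_) i
    · rw [finSuccEquiv_X_zero, Polynomial.map_X, Polynomial.eval₂_X, Fin.cons_zero]
    · rw [finSuccEquiv_X_succ, Polynomial.map_C, Polynomial.eval₂_C, Fin.cons_succ]
      show _ = ι (aeval f (X i))
      rw [aeval_X]

lemma aux_backward {F : Type*} [Field F] {m : ℕ} (A : Subalgebra F (MvPolynomial (Fin (m+1)) F))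
    (R : Subalgebra F (MvPolynomial (Fin m) F))
    (π : A →ₐ[F] R) (ι : R →ₐ[F] A) (hπι : ∀ r, π (ι r) = r)
    (hιh : ∀ (a : R) (d : ℕ), (a : MvPolynomial (Fin m) F).IsHomogeneous d →
      (ι a : MvPolynomial (Fin (m+1)) F).IsHomogeneous d)
    (hιd : ∀ a : A, (ι (π a) : MvPolynomial (Fin (m+1)) F).totalDegree ≤
      (a : MvPolynomial (Fin (m+1)) F).totalDegree)
    (t : A) (ht : t ≠ 0) (hth : (t : MvPolynomial (Fin (m+1)) F).IsHomogeneous 1)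
    (hker : ∀ x, π x = 0 ↔ ∃ a, x = t * a) (hR : IsCM R) : IsCM A := by
  rw [isCM_iff] at hR ⊢
  obtain ⟨f, hf, hF⟩ := hR
  have ht0 : (t : MvPolynomial (Fin (m+1)) F) ≠ 0 := fun h => ht (Subtype.ext h)
  have hb := back_bij (ι : R →+* A) (π : A →+* R) hπι t ht hker
    (fun a => (a : MvPolynomial (Fin (m+1)) F).totalDegree)
    (fun x => (totalDegree_sub _ _).trans (max_le le_rfl (hιd x)))
    (fun a ha => by
      have ha0 : (a : MvPolynomial (Fin (m+1)) F) ≠ 0 := fun h => ha (Subtype.ext h)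
      show (a : MvPolynomial (Fin (m+1)) F).totalDegree <
        ((t : MvPolynomial (Fin (m+1)) F) * (a : MvPolynomial (Fin (m+1)) F)).totalDegree
      rw [totalDegree_mul_of_isDomain ht0 ha0, hth.totalDegree ht0]
      omega)
  refine ⟨_, ?_, back_free ι t hb f hF⟩
  intro i
  refine Fin.cases ⟨1, one_pos, hth⟩ (fun i => ?_) i
  obtain ⟨d, hd, h⟩ := hf i
  exact ⟨d, hd, hιh _ _ h⟩

lemma mem_inv {F : Type*} [Field F] {n : ℕ} {G : Type*} [Group G]
    (ρ : G →* GL (Fin n) F) (p : MvPolynomial (Fin n) F) :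
    p ∈ invariants ρ ↔ ∀ σ : G, linSub (ρ σ : Matrix (Fin n) (Fin n) F) p = p := Iff.rfl

/-- In the situation of a split short exact sequence
`0 → U' → U →(β) V → 0` of right `FG`-modules, with `U' ≅ F` the trivial module spanned by a
`G`-fixed element `f̂ ∈ U ⊆ S[U]₁`: `S[U]^G` is Cohen-Macaulay if and only if `S[V]^G` is
Cohen-Macaulay. -/
theorem stmt5 {F : Type*} [Field F] {G : Type*} [Group G] [Finite G] {m : ℕ}
    (ρU : G →* GL (Fin (m + 1)) F) (ρV : G →* GL (Fin m) F)
    (B : Matrix (Fin (m + 1)) (Fin m) F) (fhat : Fin (m + 1) → F)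
    (hsur : ∀ v : Fin m → F, ∃ u : Fin (m + 1) → F, Matrix.vecMul u B = v)
    (hker : ∀ u : Fin (m + 1) → F, Matrix.vecMul u B = 0 ↔ ∃ c : F, u = c • fhat)
    (hne : fhat ≠ 0)
    (hequiv : ∀ σ : G, (ρU σ : Matrix (Fin (m + 1)) (Fin (m + 1)) F) * B
      = B * (ρV σ : Matrix (Fin m) (Fin m) F))
    (hfix : ∀ σ : G, Matrix.vecMul fhat (ρU σ : Matrix (Fin (m + 1)) (Fin (m + 1)) F) = fhat)
    (hsplit : ∃ γ : Matrix (Fin m) (Fin (m + 1)) F, γ * B = 1 ∧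
      ∀ σ : G, (ρV σ : Matrix (Fin m) (Fin m) F) * γ
        = γ * (ρU σ : Matrix (Fin (m + 1)) (Fin (m + 1)) F)) :
    IsCM (invariants ρU) ↔ IsCM (invariants ρV) := by
  obtain ⟨γ, hγ, hγe⟩ := hsplit
  have hfB : Matrix.vecMul fhat B = 0 := (hker fhat).2 ⟨1, (one_smul F fhat).symm⟩
  have hl : ∀ i, ∃ c : F, (1 : Matrix (Fin (m+1)) (Fin (m+1)) F) i - (B * γ) i = c • fhat := by
    intro i
    rw [← hker, Matrix.sub_vecMul]
    have h1 : Matrix.vecMul ((1 : Matrix (Fin (m+1)) (Fin (m+1)) F) i) B = B i := by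
      have : ((1 : Matrix (Fin (m+1)) (Fin (m+1)) F) * B) i = B i := by rw [Matrix.one_mul]
      exact this
    have h2 : Matrix.vecMul ((B * γ) i) B = B i := by
      have : ((B * γ) * B) i = B i := by rw [Matrix.mul_assoc, hγ, Matrix.mul_one]
      exact this
    rw [h1, h2, sub_self]
  choose lam hlam using hl
  have hτ0 : linForm fhat ≠ 0 := linForm_ne fhat hne
  have hτinv : linForm fhat ∈ invariants ρU := by
    rw [mem_inv]
    intro σ
    rw [linSub_linForm, hfix]
  have hBinv : ∀ p ∈ invariants ρU, linSub B p ∈ invariants ρV := by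
    intro p hp
    rw [mem_inv] at hp ⊢
    intro σ
    rw [linSub_comp, ← hequiv, ← linSub_comp, hp]
  have hγinv : ∀ p ∈ invariants ρV, linSub γ p ∈ invariants ρU := by
    intro p hp
    rw [mem_inv] at hp ⊢
    intro σ
    rw [linSub_comp, ← hγe, ← linSub_comp, hp]
  have hBγ : ∀ p, linSub B (linSub γ p) = p := by
    intro p
    rw [linSub_comp, hγ, linSub_one]
  have hdiff : ∀ p, linForm fhat ∣ p - linSub γ (linSub B p) := by
    intro p
    have : (Ideal.Quotient.mkₐ F (Ideal.span {linForm fhat})) =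
        (Ideal.Quotient.mkₐ F (Ideal.span {linForm fhat})).comp ((linSub γ).comp (linSub B)) := by
      refine MvPolynomial.algHom_ext fun i => ?_
      show Ideal.Quotient.mk _ (X i) = Ideal.Quotient.mk _ (linSub γ (linSub B (X i)))
      rw [Ideal.Quotient.eq, Ideal.mem_span_singleton, linSub_comp, linSub_X]
      have h1 : (X i : MvPolynomial (Fin (m+1)) F) = linForm ((B * γ) i) + lam i • linForm fhat := by
        rw [← linForm_smul, ← hlam, ← linForm_add, add_sub_cancel, ← linSub_X, linSub_one]
      rw [h1, add_sub_cancel_left, smul_eq_C_mul]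
      exact Dvd.intro_left _ rfl
    have h2 := DFunLike.congr_fun this p
    rw [← Ideal.mem_span_singleton, ← Ideal.Quotient.eq]
    exact h2
  let π : invariants ρU →ₐ[F] invariants ρV :=
    ((linSub B).comp (invariants ρU).val).codRestrict _ (fun x => hBinv x x.2)
  let ι : invariants ρV →ₐ[F] invariants ρU :=
    ((linSub γ).comp (invariants ρV).val).codRestrict _ (fun x => hγinv x x.2)
  have hπ : ∀ x, (π x : MvPolynomial (Fin m) F) = linSub B x := fun x => rfl
  have hι : ∀ x, (ι x : MvPolynomial (Fin (m+1)) F) = linSub γ x := fun x => rfl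
  clear_value π ι
  have hπι : ∀ r, π (ι r) = r := fun r => Subtype.ext (by rw [hπ, hι, hBγ])
  have ht : (⟨linForm fhat, hτinv⟩ : invariants ρU) ≠ 0 := fun h =>
    hτ0 (congrArg Subtype.val h)
  have hk : ∀ x, π x = 0 ↔ ∃ a, x = (⟨linForm fhat, hτinv⟩ : invariants ρU) * a := by
    intro x
    constructor
    · intro h
      have h0 : linSub B (x : MvPolynomial (Fin (m+1)) F) = 0 := by
        rw [← hπ, h]; rfl
      obtain ⟨q, hq⟩ := hdiff (x : MvPolynomial (Fin (m+1)) F)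
      rw [h0, map_zero, sub_zero] at hq
      refine ⟨⟨q, ?_⟩, Subtype.ext hq⟩
      rw [mem_inv]
      intro σ
      have h1 := (mem_inv ρU _).1 x.2 σ
      rw [hq, map_mul, (mem_inv ρU _).1 hτinv σ] at h1
      exact mul_left_cancel₀ hτ0 h1
    · rintro ⟨a, rfl⟩
      apply Subtype.ext
      rw [hπ]
      show linSub B (linForm fhat * (a : MvPolynomial (Fin (m+1)) F)) = 0
      rw [map_mul, linSub_linForm, hfB, linForm_zero, zero_mul]
  constructor
  · refine aux_forward _ _ ?_ π (fun r => ⟨ι r, hπι r⟩) ?_ _ ht hk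
    · intro p hp d
      rw [mem_inv] at hp ⊢
      intro σ
      rw [← linSub_comm, hp]
    · intro a d h
      rw [hπ]
      exact linSub_hom B _ d h
  · refine aux_backward _ _ π ι hπι ?_ ?_ _ ht (linForm_hom fhat) hk
    · intro a d h
      rw [hι]
      exact linSub_hom γ _ d h
    · intro a
      rw [hι, hπ]
      exact (linSub_deg _ _).trans (linSub_deg _ _)
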